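/- arXiv:0805.1071 — 2 statements merged into one kernel-verified Lean document; each statement's English description precedes it below -/
import Mathlib

section
/- Let m ≥ 1 be an integer, let 0 < q < 1 be real, and let X be a binomial random variable with parameters m and q, i.e., Pr[X = k] = C(m,k)·q^k·(1−q)^{m−k} for integers 0 ≤ k ≤ m. Then for every real ε with 0 ≤ ε < (1−q)/q, one has Pr[X = ⌈qm(1+ε)⌉] ≥ c·q·m^{−3/2}·exp(−ε²qm/(1−q)), where c = 1/(4√(2π)). -/
/-!
Put `p = q(1+ε)`, `k = ⌈mp⌉`, and let `D(p‖q)` be the binary relative entropy. From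
`log x ≤ x - 1`, `D(p‖q) ≤ (p-q)²/(q(1-q)) = ε²q/(1-q)` (`kl_le_chiSq`), so the exponential factor
of the claim is at most `exp(-m D(p‖q))`.

If `k < m`, let `κ = k/m`. As `k` exceeds `mp` by at most `1`, the convexity of `D(·‖q)`, in the form
of Gibbs' inequality, shows that replacing `p` by `κ` costs at most the factor `q(1-κ)/(κ(1-q))`
(`pow_mul_pow_lower`). What is left is the point probability at `k` of the binomial law with
parameters `m` and `κ`, which is at least of order `√(m/(k(m-k)))` by Stirling's bounds
(`choose_mul_pow_lower`); the product of the two factors exceeds the prefactor of the claim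
(`stirling_factor_lower`).

If `k = m`, the derivative of `D(·‖q)` is infinite at `1`, and `q ^ m` is bounded below directly,
using `0 < m(1-p) < 1` (`pow_lower_of_top`).
-/

open Real in
/-- The relative entropy of two Bernoulli laws is at most their `χ²` divergence. -/
lemma kl_le_chiSq {p q : ℝ} (hp0 : 0 < p) (hp1 : p < 1) (hq0 : 0 < q) (hq1 : q < 1) :
    p * (log p - log q) + (1 - p) * (log (1 - p) - log (1 - q)) ≤ (p - q) ^ 2 / (q * (1 - q)) := by
  have hp1' : 0 < 1 - p := by linarith
  have hq1' : 0 < 1 - q := by linarith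
  have h1 := log_le_sub_one_of_pos (div_pos hp0 hq0)
  have h2 := log_le_sub_one_of_pos (div_pos hp1' hq1')
  rw [log_div hp0.ne' hq0.ne'] at h1
  rw [log_div hp1'.ne' hq1'.ne'] at h2
  calc _ ≤ p * (p / q - 1) + (1 - p) * ((1 - p) / (1 - q) - 1) :=
        add_le_add (mul_le_mul_of_nonneg_left h1 hp0.le) (mul_le_mul_of_nonneg_left h2 hp1'.le)
    _ = _ := by field_simp; ring

open Real in
/-- Gibbs' inequality for two Bernoulli laws. -/
lemma gibbs_two {p r : ℝ} (hp0 : 0 < p) (hp1 : p < 1) (hr0 : 0 < r) (hr1 : r < 1) :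
    p * log r + (1 - p) * log (1 - r) ≤ p * log p + (1 - p) * log (1 - p) := by
  have hp1' : 0 < 1 - p := by linarith
  have hr1' : 0 < 1 - r := by linarith
  have h1 := mul_le_mul_of_nonneg_left (log_le_sub_one_of_pos (div_pos hr0 hp0)) hp0.le
  have h2 := mul_le_mul_of_nonneg_left (log_le_sub_one_of_pos (div_pos hr1' hp1')) hp1'.le
  rw [log_div hr0.ne' hp0.ne'] at h1
  rw [log_div hr1'.ne' hp1'.ne'] at h2
  have e1 : p * (r / p - 1) = r - p := by field_simp
  have e2 : (1 - p) * ((1 - r) / (1 - p) - 1) = p - r := by field_simp; ring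
  linarith

open Real in
/-- Moving from `p` to the lattice point `k / m`, at distance less than `1 / m`, multiplies
`exp (-m D(·‖q))` by at least `q (1 - κ) / (κ (1 - q))`, where `κ = k / m` and `j = m - k`. Here
`exp (-m D(κ‖q))` is `q ^ k (1 - q) ^ j / (κ ^ k (1 - κ) ^ j)`, and `D(p‖q)` is replaced by its `χ²` bound. -/
lemma pow_mul_pow_lower {p q : ℝ} {k j : ℕ} (hk : 0 < k) (hj : 0 < j) (hq0 : 0 < q) (hqp : q ≤ p)
    (hp1 : p < 1) (hlo : ((k + j : ℕ) : ℝ) * p ≤ k) (hhi : (k : ℝ) < ((k + j : ℕ) : ℝ) * p + 1) :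
    ((k : ℝ) / (k + j : ℕ)) ^ k * ((j : ℝ) / (k + j : ℕ)) ^ j * (q * j / (k * (1 - q))) *
      exp (-((k + j : ℕ) * ((p - q) ^ 2 / (q * (1 - q))))) ≤ q ^ k * (1 - q) ^ j := by
  have hk' : (0 : ℝ) < k := by exact_mod_cast hk
  have hj' : (0 : ℝ) < j := by exact_mod_cast hj
  have hm' : ((k + j : ℕ) : ℝ) = k + j := by push_cast; ring
  rw [hm'] at hlo hhi ⊢
  have hm0 : (0 : ℝ) < k + j := by positivity
  have hp0 : 0 < p := by linarith
  have hq1' : 0 < 1 - q := by linarith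
  have hr1 : (k : ℝ) / (k + j) < 1 := by rw [div_lt_one hm0]; linarith
  have hrj : 1 - (k : ℝ) / (k + j) = j / (k + j) := by field_simp; ring
  have hr0 : (0 : ℝ) < k / (k + j) := by positivity
  have hs0 : (0 : ℝ) < j / (k + j) := by positivity
  have hD := mul_le_mul_of_nonneg_left (kl_le_chiSq hp0 hp1 hq0 (by linarith)) hm0.le
  have hG := mul_le_mul_of_nonneg_left (gibbs_two hp0 hp1 hr0 hr1) hm0.le
  rw [hrj] at hG
  have hqr : q ≤ (k : ℝ) / (k + j) := by rw [le_div_iff₀ hm0]; nlinarith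
  have hlq : log q ≤ log ((k : ℝ) / (k + j)) := log_le_log hq0 hqr
  have hls : log ((j : ℝ) / (k + j)) ≤ log (1 - q) := log_le_log hs0 (by rw [← hrj]; linarith)
  have hratio : q * j / (k * (1 - q)) = exp (log q + log ((j : ℝ) / (k + j))
      - (log ((k : ℝ) / (k + j)) + log (1 - q))) := by
    rw [exp_sub, exp_add, exp_add, exp_log hq0, exp_log hs0, exp_log hr0, exp_log hq1']
    field_simp
  have hpow : ∀ {x : ℝ} (n : ℕ), 0 < x → x ^ n = exp (n * log x) := by
    intro x n hx
    rw [exp_nat_mul, exp_log hx]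
  rw [hratio, hpow k hr0, hpow j hs0, hpow k hq0, hpow j hq1', ← exp_add, ← exp_add, ← exp_add,
    ← exp_add, exp_le_exp]
  generalize log q = a at *
  generalize log (1 - q) = b at *
  generalize log ((k : ℝ) / (k + j)) = u at *
  generalize log ((j : ℝ) / (k + j)) = v at *
  generalize (p - q) ^ 2 / (q * (1 - q)) = X at *
  -- The excess `k - m p` is at most `1`, and `u + b - a - v` is the derivative of `D(·‖q)` at `κ`.
  have hδ : 0 ≤ (1 - (k - (k + j) * p)) * (u + b - a - v) :=
    mul_nonneg (by linarith) (by linarith)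
  linarith

open Real in
/-- The rounding step at the right end point, where `⌈mp⌉ = m`: here `δ = m (1 - p)` lies in
`(0, 1)`, and `p ^ (m p) ≥ exp (-δ)`, `δ ^ δ ≥ exp (δ - 1)`. -/
lemma pow_lower_of_top {p q : ℝ} {m : ℕ} (hm : 0 < m) (hq0 : 0 < q) (hqp : q ≤ p)
    (hp1 : p < 1) (hhi : (m : ℝ) < m * p + 1) :
    exp (-1) / m * q * exp (-(m * ((p - q) ^ 2 / (q * (1 - q))))) ≤ q ^ m := by
  have hm0 : (0 : ℝ) < m := by exact_mod_cast hm
  have hm1 : (1 : ℝ) ≤ m := by exact_mod_cast hm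
  have hp0 : 0 < p := by linarith
  have hp1' : 0 < 1 - p := by linarith
  have hq1' : 0 < 1 - q := by linarith
  have hD := mul_le_mul_of_nonneg_left (kl_le_chiSq hp0 hp1 hq0 (by linarith)) hm0.le
  have hlp := mul_le_mul_of_nonneg_left (one_sub_inv_le_log_of_pos hp0) (mul_pos hm0 hp0).le
  have e1 : m * p * (1 - p⁻¹) = m * p - m := by field_simp
  have hδ0 : 0 < m * (1 - p) := by positivity
  have hδ1 : m * (1 - p) < 1 := by linarith
  have hlδ := mul_le_mul_of_nonneg_left (one_sub_inv_le_log_of_pos hδ0) hδ0.le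
  have e2 : m * (1 - p) * (1 - (m * (1 - p))⁻¹) = m * (1 - p) - 1 := by field_simp
  rw [e2, log_mul hm0.ne' hp1'.ne'] at hlδ
  rw [e1] at hlp
  have h1 : log q ≤ 0 := log_nonpos hq0.le (by linarith)
  have h2 : log (1 - q) ≤ 0 := log_nonpos hq1'.le (by linarith)
  have h3 : 0 ≤ log m := log_nonneg hm1
  -- `(q / m) ^ δ ≥ q / m`, as `δ = m (1 - p) < 1`.
  have h4 : 0 ≤ (1 - m * (1 - p)) * (log m - log q) := mul_nonneg (by linarith) (by linarith)
  have h5 : 0 ≤ m * (1 - p) * (-log (1 - q)) := mul_nonneg hδ0.le (by linarith)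
  have hL : exp (-1) / m * q = exp (-1 - log m + log q) := by
    rw [exp_add, exp_sub, exp_log hm0, exp_log hq0]
  have hR : q ^ m = exp (m * log q) := by rw [exp_nat_mul, exp_log hq0]
  rw [hL, hR, ← exp_add, exp_le_exp]
  linarith

open Real in
/-- The Stirling sequence decreases from its value `e / √2` at `1`. -/
lemma factorial_le_exp_mul_sqrt {n : ℕ} (hn : 0 < n) :
    (n.factorial : ℝ) ≤ exp 1 * √n * (n / exp 1) ^ n := by
  obtain ⟨n, rfl⟩ := Nat.exists_eq_succ_of_ne_zero hn.ne'
  have h := Stirling.stirlingSeq'_antitone (Nat.zero_le n)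
  simp only [Function.comp_apply, Nat.succ_eq_add_one, zero_add] at h
  rw [Stirling.stirlingSeq_one, Stirling.stirlingSeq, div_le_iff₀ (by positivity)] at h
  refine h.trans (le_of_eq ?_)
  rw [sqrt_mul (by norm_num)]
  field_simp

open Real in
/-- A lower bound for the point probability at `k` of the binomial law with parameters `k + j` and
`k / (k + j)`. -/
lemma choose_mul_pow_lower {k j : ℕ} (hk : 0 < k) (hj : 0 < j) :
    √(2 * π) / exp 1 ^ 2 * (√(k + j : ℕ) / (√k * √j)) ≤
      ((k + j).choose k : ℝ) * (((k : ℝ) / (k + j : ℕ)) ^ k * ((j : ℝ) / (k + j : ℕ)) ^ j) := by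
  have hk' : (0 : ℝ) < k := by exact_mod_cast hk
  have hj' : (0 : ℝ) < j := by exact_mod_cast hj
  have hm' : (0 : ℝ) < (k + j : ℕ) := by positivity
  have h1 := Stirling.le_factorial_stirling (k + j)
  have h2 := factorial_le_exp_mul_sqrt hk
  have h3 := factorial_le_exp_mul_sqrt hj
  have hc : ((k + j).choose k : ℝ) * k.factorial * j.factorial = (k + j).factorial := by
    have h := Nat.choose_mul_factorial_mul_factorial (Nat.le_add_right k j)
    rw [Nat.add_sub_cancel_left] at h
    exact_mod_cast h
  have h4 : ((k + j).factorial : ℝ) ≤ (k + j).choose k *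
      (exp 1 * √k * (k / exp 1) ^ k) * (exp 1 * √j * (j / exp 1) ^ j) := by
    rw [← hc]; gcongr
  have h5 := h1.trans h4
  rw [sqrt_mul (by positivity)] at h5
  generalize hM : ((k + j : ℕ) : ℝ) = M at *
  have hsk : 0 < √(k : ℝ) := sqrt_pos.2 hk'
  have hsj : 0 < √(j : ℝ) := sqrt_pos.2 hj'
  have he := exp_pos 1
  simp only [div_pow, pow_add] at h5 ⊢
  rw [div_mul_div_comm, div_le_iff₀ (by positivity)]
  have hMk : 0 < M ^ k * M ^ j := by positivity
  have hek : 0 < exp 1 ^ k * exp 1 ^ j := by positivity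
  refine le_of_mul_le_mul_right (a := M ^ k * M ^ j / (exp 1 ^ k * exp 1 ^ j)) ?_ (by positivity)
  rw [div_mul_div_comm] at h5
  refine h5.trans (le_of_eq ?_)
  field_simp

/-- The Stirling factor times the rounding cost `q (1 - κ) / (κ (1 - q))`, where `κ = k / M` and
`1 - κ = i / M`, is at least the prefactor `c q M ^ (-3/2)`, as `8 π ≥ e ^ 2`. -/
lemma stirling_factor_lower {M k i q : ℝ} (hk1 : 1 ≤ k) (hi1 : 1 ≤ i) (hkM : k ≤ M)
    (hq0 : 0 < q) (hq1 : q < 1) :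
    1 / (4 * √(2 * Real.pi)) * q * (1 / (M * √M)) ≤
      √(2 * Real.pi) / Real.exp 1 ^ 2 * (√M / (√k * √i)) * (q * i / (k * (1 - q))) := by
  have hq1' : 0 < 1 - q := by linarith
  have hss : √(2 * Real.pi) * √(2 * Real.pi) = 2 * Real.pi :=
    Real.mul_self_sqrt (by positivity)
  have he3 : Real.exp 1 < 2.8 := by linarith [Real.exp_one_lt_d9]
  have he0 := Real.exp_pos 1
  have hsk := Real.sqrt_pos.2 (zero_lt_one.trans_le hk1)
  have hsi : 1 ≤ √i := Real.one_le_sqrt.2 hi1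
  have hM1 : 1 ≤ M := hk1.trans hkM
  have hskM : √k ≤ √M := Real.sqrt_le_sqrt hkM
  have hc : 1 / (4 * √(2 * Real.pi)) ≤ √(2 * Real.pi) / Real.exp 1 ^ 2 := by
    rw [div_le_div_iff₀ (by positivity) (by positivity)]
    nlinarith [Real.pi_gt_three]
  have hd : 1 / (M * √M) ≤ √M / (√k * √i) * (i / k) := by
    have hi2 : i = √i * √i := (Real.mul_self_sqrt (by linarith)).symm
    calc 1 / (M * √M) ≤ 1 / (k * √k) := one_div_le_one_div_of_le (by positivity) (by gcongr)
      _ ≤ √M * √i / (k * √k) := by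
        gcongr
        exact one_le_mul_of_one_le_of_one_le (Real.one_le_sqrt.2 hM1) hsi
      _ = √M * (√i * √i) / (√k * √i * k) := by field_simp
      _ = _ := by rw [← hi2, div_mul_div_comm]
  have hq : q ≤ q / (1 - q) := by rw [le_div_iff₀ hq1']; nlinarith
  calc 1 / (4 * √(2 * Real.pi)) * q * (1 / (M * √M))
      ≤ √(2 * Real.pi) / Real.exp 1 ^ 2 * (q / (1 - q)) * (√M / (√k * √i) * (i / k)) := by gcongr
    _ = _ := by rw [mul_div_mul_comm]; field_simp

/-- Theorem 2 (sampling theorem) of Svitkina–Fleischer: if `X` is binomial with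
parameters `m ≥ 1` and `0 < q < 1`, then for `0 ≤ ε < (1-q)/q`,
`Pr[X = ⌈qm(1+ε)⌉] ≥ c·q·m^{-3/2}·exp(-ε²qm/(1-q))` with `c = 1/(4√(2π))`. -/
theorem binomial_point_prob_lower_bound
    (m : ℕ) (hm : 1 ≤ m) (q ε : ℝ) (hq0 : 0 < q) (hq1 : q < 1)
    (hε0 : 0 ≤ ε) (hε1 : ε < (1 - q) / q) :
    (m.choose ⌈q * m * (1 + ε)⌉₊ : ℝ) * q ^ ⌈q * m * (1 + ε)⌉₊ *
        (1 - q) ^ (m - ⌈q * m * (1 + ε)⌉₊) ≥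
      1 / (4 * Real.sqrt (2 * Real.pi)) * q * (m : ℝ) ^ (-(3 / 2) : ℝ) *
        Real.exp (-(ε ^ 2 * q * m) / (1 - q)) := by
  have hm0 : (0 : ℝ) < m := by exact_mod_cast hm
  have hm1 : (1 : ℝ) ≤ m := by exact_mod_cast hm
  have hq1' : 0 < 1 - q := by linarith
  obtain ⟨p, hp⟩ : ∃ p, p = q * (1 + ε) := ⟨_, rfl⟩
  have hp1 : p < 1 := by
    rw [lt_div_iff₀ hq0] at hε1
    rw [hp]; linarith
  have hqp : q ≤ p := by rw [hp]; nlinarith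
  have hp0 : 0 < p := by linarith
  have hmp : q * m * (1 + ε) = m * p := by rw [hp]; ring
  have hexp : -(ε ^ 2 * q * m) / (1 - q) = -(m * ((p - q) ^ 2 / (q * (1 - q)))) := by
    rw [hp]; field_simp; ring
  have hm32 : (m : ℝ) ^ (-(3 / 2) : ℝ) = 1 / (m * √m) := by
    rw [Real.rpow_neg hm0.le, show (3 / 2 : ℝ) = 1 + 1 / 2 by norm_num, Real.rpow_add hm0,
      Real.rpow_one, ← Real.sqrt_eq_rpow, one_div]
  rw [hmp, hexp, hm32, ge_iff_le]
  have hlo := Nat.le_ceil (m * p)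
  have hhi := Nat.ceil_lt_add_one (mul_pos hm0 hp0).le
  have hk0 : 0 < ⌈m * p⌉₊ := Nat.ceil_pos.2 (mul_pos hm0 hp0)
  have hkm : ⌈m * p⌉₊ ≤ m := Nat.ceil_le.2 (by nlinarith)
  generalize ⌈m * p⌉₊ = k at *
  have hs : 2 < √(2 * Real.pi) := by
    rw [Real.lt_sqrt (by norm_num)]
    linarith [Real.pi_gt_three]
  have he3 : Real.exp 1 < 2.8 := by linarith [Real.exp_one_lt_d9]
  have he0 := Real.exp_pos 1
  have hsm : 1 ≤ √(m : ℝ) := Real.one_le_sqrt.2 hm1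
  rcases hkm.eq_or_lt with rfl | hlt
  · have h := pow_lower_of_top hk0 hq0 hqp hp1 hhi
    rw [Nat.choose_self, Nat.sub_self, pow_zero, mul_one, Nat.cast_one, one_mul]
    refine le_trans ?_ h
    have hc : 1 / (4 * √(2 * Real.pi)) ≤ Real.exp (-1) := by
      rw [Real.exp_neg, ← one_div]
      exact one_div_le_one_div_of_le he0 (by linarith)
    have hd : 1 / (k * √(k : ℝ)) ≤ 1 / k :=
      one_div_le_one_div_of_le hm0 (by nlinarith)
    have hcd := mul_le_mul hc hd (by positivity) (Real.exp_pos _).le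
    calc _ = 1 / (4 * √(2 * Real.pi)) * (1 / (k * √(k : ℝ))) * q *
          Real.exp (-(k * ((p - q) ^ 2 / (q * (1 - q))))) := by ring
      _ ≤ Real.exp (-1) * (1 / k) * q * Real.exp (-(k * ((p - q) ^ 2 / (q * (1 - q))))) := by
          gcongr
      _ = _ := by ring
  · obtain ⟨j, rfl⟩ := Nat.exists_eq_add_of_lt hlt
    rw [add_assoc] at *
    generalize hj : j + 1 = i at *
    have hi : 0 < i := by omega
    have hi1 : (1 : ℝ) ≤ i := by exact_mod_cast hi
    have hk1 : (1 : ℝ) ≤ k := by exact_mod_cast hk0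
    rw [Nat.add_sub_cancel_left]
    have h1 := pow_mul_pow_lower hk0 hi hq0 hqp hp1 hlo hhi
    have h2 := choose_mul_pow_lower hk0 hi
    have hkM : (k : ℝ) ≤ (k + i : ℕ) := by push_cast; linarith
    generalize ((k + i : ℕ) : ℝ) = M at *
    have hE := Real.exp_pos (-(M * ((p - q) ^ 2 / (q * (1 - q)))))
    generalize Real.exp (-(M * ((p - q) ^ 2 / (q * (1 - q))))) = E at *
    have h3 := mul_le_mul_of_nonneg_right (stirling_factor_lower hk1 hi1 hkM hq0 hq1) hE.le
    have hR : 0 ≤ q * i / (k * (1 - q)) * E := by positivity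
    have h4 := mul_le_mul_of_nonneg_right h2 hR
    have h5 := mul_le_mul_of_nonneg_left h1 (Nat.cast_nonneg (α := ℝ) ((k + i).choose k))
    linarith
end

section
/- Let V be a finite set with |V| = n ≥ 3, let I be a finite index set, u, v : I → V with u_i ≠ v_i, and d : I → ℝ with d_i > 0. Say pair i is separated by A ⊆ V if exactly one of u_i, v_i lies in A. For S ⊆ V define w_S(x) = Σ_{i separated by S, s_i = x} d_i − Σ_{i separated by S, t_i = x} d_i, where s_i is the endpoint of pair i lying in S and t_i the endpoint not in S. Let U* ⊆ V be nonempty and let D* = Σ_{i: pair i separated by U*} d_i. Then the number of subsets S ⊆ V such that Σ_{x∈U*} w_S(x) ≥ (D*/4)·√(ln n / n) is at least (c/(8n³))·2^n, where c = 1/(4√(2π)). (Equivalently, if S is chosen by including each element of V independently with probability 1/2, then Pr[Σ_{x∈U*} w_S(x) ≥ (D*/4)·√(ln n / n)] ≥ c/(8n³).) -/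
/-!
Write `ε_T(x) = 1` for `x ∈ T` and `-1` otherwise. Replacing `S` by the set `T` of those `x` for
which `x ∈ S ↔ x ∈ U*` is a bijection on subsets (`agree`), and it turns the sum of the weights
over `U*` into `½ ∑ₓ Dₓ ε_T(x)`, where `Dₓ` is the demand at `x` of the pairs separated by `U*`
(`sum_sepWeight_agree`); moreover `∑ₓ Dₓ = 2 D*`.

Identify the ground set with the cyclic group of order `n`. The average of `∑ₓ Dₓ ε_{g+T}(x)` over
all translations `g` is `((2|T| - n) / n) ∑ₓ Dₓ`, so every `T` of size `k` has a translate for which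
the sum is at least this average. Hence at least `C(n, k) / n` subsets do at least as well
(`choose_le_card_mul_good`). It remains to take `k` with `2k - n ≥ √(n ln n) / 4` and `C(n, k)`
large. With `k = ⌊n/2⌋ + j` and `j` about `√(n ln n) / 8`, the quotients of consecutive binomial
coefficients show that `C(n, k)` is at least `C(n, ⌊n/2⌋) / n ≥ 2ⁿ / (n (n + 1))`, as soon as
`n ≥ 20` (`exists_large_choose`). This suffices, as `c ≤ 1/10`. For `n < 20` the required count is
at most `1`, and `T = V` is good.
-/

/-- Demand pair `i` (with endpoints `u i`, `v i`) is separated by the set `A`: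
exactly one of its endpoints lies in `A`. -/
def Separated {α ι : Type*} [DecidableEq α] (u v : ι → α) (A : Finset α) (i : ι) : Prop :=
  (u i ∈ A ∧ v i ∉ A) ∨ (u i ∉ A ∧ v i ∈ A)

instance {α ι : Type*} [DecidableEq α] (u v : ι → α) (A : Finset α) :
    DecidablePred (Separated u v A) := fun i =>
  inferInstanceAs (Decidable ((u i ∈ A ∧ v i ∉ A) ∨ (u i ∉ A ∧ v i ∈ A)))

/-- The weight `w_S(x)`: the sum of demands `d i` over pairs `i` separated by `S` whose
endpoint in `S` is `x`, minus the sum of demands over pairs separated by `S` whose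
endpoint outside `S` is `x`. -/
def sepWeight {α ι : Type*} [Fintype ι] [DecidableEq α] (u v : ι → α) (d : ι → ℝ)
    (S : Finset α) (x : α) : ℝ :=
  (∑ i ∈ Finset.univ.filter
      (fun i => Separated u v S i ∧ (if u i ∈ S then u i else v i) = x), d i)
  - (∑ i ∈ Finset.univ.filter
      (fun i => Separated u v S i ∧ (if u i ∈ S then v i else u i) = x), d i)

/-- The `±1` indicator of a finite set. -/
def signOf {α : Type*} [DecidableEq α] (T : Finset α) (x : α) : ℝ := if x ∈ T then 1 else -1

/-- The set of points on which `T` and `U` agree, that is, the complement of their symmetric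
difference. -/
def agree {α : Type*} [Fintype α] [DecidableEq α] (U T : Finset α) : Finset α :=
  Finset.univ.filter (fun x => x ∈ T ↔ x ∈ U)

theorem mem_agree {α : Type*} [Fintype α] [DecidableEq α] (U T : Finset α) (x : α) :
    x ∈ agree U T ↔ (x ∈ T ↔ x ∈ U) := by simp [agree]

theorem agree_injective {α : Type*} [Fintype α] [DecidableEq α] (U : Finset α) :
    Function.Injective (agree U) := by
  intro A B h
  ext x
  have hx := mem_agree U A x
  rw [h, mem_agree] at hx
  tauto

/-- The demand at `x` of the pairs separated by `U`. -/
def demandAt {α ι : Type*} [Fintype ι] [DecidableEq α] (u v : ι → α) (d : ι → ℝ)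
    (U : Finset α) (x : α) : ℝ :=
  ∑ i ∈ Finset.univ.filter (Separated u v U),
    d i * ((if u i = x then 1 else 0) + (if v i = x then 1 else 0))

theorem sum_demandAt_mul {α ι : Type*} [Fintype α] [Fintype ι] [DecidableEq α] (u v : ι → α)
    (d : ι → ℝ) (U : Finset α) (f : α → ℝ) :
    ∑ x, demandAt u v d U x * f x =
      ∑ i ∈ Finset.univ.filter (Separated u v U), d i * (f (u i) + f (v i)) := by
  simp only [demandAt, Finset.sum_mul]
  rw [Finset.sum_comm]
  refine Finset.sum_congr rfl fun i _ => ?_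
  simp [mul_assoc, ← Finset.mul_sum, add_mul, Finset.sum_add_distrib]

/-- Only the pairs separated by `U` contribute to the total weight of `U`: if both endpoints of a
pair lie in `U`, its two contributions cancel. -/
theorem sum_sepWeight_agree {α ι : Type*} [Fintype α] [Fintype ι] [DecidableEq α] (u v : ι → α)
    (d : ι → ℝ) (U T : Finset α) :
    ∑ x ∈ U, sepWeight u v d (agree U T) x =
      1 / 2 * ∑ x, demandAt u v d U x * signOf T x := by
  have key : ∀ (P : ι → Prop) [DecidablePred P] (q : ι → α),
      ∑ x ∈ U, ∑ i ∈ Finset.univ.filter (fun i => P i ∧ q i = x), d i =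
        ∑ i, if P i ∧ q i ∈ U then d i else 0 := by
    intro P _ q
    simp only [Finset.sum_filter]
    rw [Finset.sum_comm]
    refine Finset.sum_congr rfl fun i _ => ?_
    by_cases hP : P i <;> simp [hP]
  rw [sum_demandAt_mul]
  simp only [sepWeight]
  rw [Finset.sum_sub_distrib, key, key, ← Finset.sum_sub_distrib, Finset.mul_sum,
    Finset.sum_filter]
  refine Finset.sum_congr rfl fun i _ => ?_
  by_cases h1 : u i ∈ U <;> by_cases h2 : v i ∈ U <;> by_cases h3 : u i ∈ T <;>
    by_cases h4 : v i ∈ T <;> simp [Separated, mem_agree, signOf, h1, h2, h3, h4] <;> ring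

theorem sum_signOf {α : Type*} [Fintype α] [DecidableEq α] (T : Finset α) :
    ∑ x, signOf T x = 2 * (T.card : ℝ) - Fintype.card α := by
  have h : ∀ x, signOf T x = 2 * (if x ∈ T then 1 else 0) - 1 := by
    intro x
    unfold signOf
    split_ifs <;> norm_num
  simp only [h, Finset.sum_sub_distrib, ← Finset.mul_sum]
  simp

/-- Some translate of `T` does at least as well as the average over all translates. -/
theorem exists_translate {G : Type*} [Fintype G] [DecidableEq G] [AddCommGroup G] (a : G → ℝ)
    (T : Finset G) :
    ∃ g : G, (2 * (T.card : ℝ) - Fintype.card G) * ∑ x, a x ≤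
      Fintype.card G * ∑ x, a x * signOf (T.map (Equiv.addLeft g).toEmbedding) x := by
  have hs : ∀ g x, signOf (T.map (Equiv.addLeft g).toEmbedding) x = signOf T (x - g) := by
    intro g x
    have : x ∈ T.map (Equiv.addLeft g).toEmbedding ↔ x - g ∈ T := by
      rw [Finset.mem_map_equiv]
      simp [sub_eq_neg_add]
    simp only [signOf, this]
  have havg : ∑ g : G, ∑ x, a x * signOf (T.map (Equiv.addLeft g).toEmbedding) x =
      (2 * (T.card : ℝ) - Fintype.card G) * ∑ x, a x := by
    simp only [hs]
    rw [Finset.sum_comm, Finset.mul_sum]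
    refine Finset.sum_congr rfl fun x _ => ?_
    rw [← Finset.mul_sum, mul_comm, ← sum_signOf]
    congr 1
    exact Equiv.sum_comp (Equiv.subLeft x) (signOf T)
  by_contra! hcon
  have hlt := Finset.sum_lt_sum_of_nonempty (Finset.univ_nonempty (α := G)) fun g _ => hcon g
  rw [← Finset.mul_sum, havg] at hlt
  simp at hlt

theorem choose_le_card_mul_good_group {G : Type*} [Fintype G] [DecidableEq G] [AddCommGroup G]
    (a : G → ℝ) (k : ℕ) (p : Finset G → Prop) [DecidablePred p]
    (hp : ∀ T : Finset G, (2 * (k : ℝ) - Fintype.card G) * ∑ x, a x ≤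
      Fintype.card G * ∑ x, a x * signOf T x → p T) :
    (Fintype.card G).choose k ≤ Fintype.card G * (Finset.univ.filter p).card := by
  rw [← Finset.card_univ (α := G), ← Finset.card_powersetCard, ← Finset.card_product]
  refine (Finset.card_le_card ?_).trans (Finset.card_image_le
    (f := fun q : G × Finset G => q.2.map (Equiv.addLeft (-q.1)).toEmbedding))
  intro T hT
  rw [Finset.mem_powersetCard] at hT
  obtain ⟨g, hg⟩ := exists_translate a T
  rw [hT.2] at hg
  refine Finset.mem_image.2 ⟨(g, T.map (Equiv.addLeft g).toEmbedding), ?_, ?_⟩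
  · simpa using hp _ hg
  · ext x
    simp

/-- A set of size `k` has a translate, for a cyclic group structure on the ground set, that is at
least average; each good set arises from at most `n` sets in this way. -/
theorem choose_le_card_mul_good {α : Type*} [Fintype α] [DecidableEq α] [Nonempty α]
    (a : α → ℝ) (k : ℕ) (p : Finset α → Prop) [DecidablePred p]
    (hp : ∀ T : Finset α, (2 * (k : ℝ) - Fintype.card α) * ∑ x, a x ≤
      Fintype.card α * ∑ x, a x * signOf T x → p T) :
    (Fintype.card α).choose k ≤ Fintype.card α * (Finset.univ.filter p).card := by
  have : NeZero (Fintype.card α) := ⟨Fintype.card_ne_zero⟩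
  let e : α ≃ ZMod (Fintype.card α) := Fintype.equivOfCardEq (ZMod.card _).symm
  let _ : AddCommGroup α := e.addCommGroup
  exact choose_le_card_mul_good_group a k p hp

theorem two_pow_le_mul_choose_half (n : ℕ) : 2 ^ n ≤ (n + 1) * n.choose (n / 2) := by
  rw [← Nat.sum_range_choose]
  refine (Finset.sum_le_sum fun i _ => Nat.choose_le_middle i n).trans ?_
  simp

/-- The quotient `C(n, m+1) / C(n, m) = (n-m) / (m+1)` is at least `(h-j+1) / (h+j)` for
`h ≤ m < h + j`, since `2 * h ≤ n`. -/
theorem choose_mul_pow_le (n h j : ℕ) (hh : 2 * h ≤ n) (hj : j ≤ h) (i : ℕ) (hi : i ≤ j) :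
    (n.choose h : ℝ) * (((h : ℝ) - j + 1) / (h + j)) ^ i ≤ n.choose (h + i) := by
  induction i with
  | zero => simp
  | succ i ih =>
    have ih := ih (by omega)
    have hstep : (n.choose (h + i + 1) : ℝ) * (h + i + 1) = n.choose (h + i) * (n - h - i) := by
      have := Nat.choose_succ_right_eq n (h + i)
      have h2 : ((n - (h + i) : ℕ) : ℝ) = n - h - i := by
        rw [Nat.cast_sub (by omega)]; push_cast; ring
      rw [← h2]
      exact_mod_cast this
    have h1 : (2 * h : ℝ) ≤ n := by exact_mod_cast hh
    have h2 : (j : ℝ) ≤ h := by exact_mod_cast hj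
    have h3 : (i + 1 : ℝ) ≤ j := by exact_mod_cast hi
    have h0 : (0 : ℝ) ≤ i := Nat.cast_nonneg i
    have hpos : (0 : ℝ) < h + i + 1 := by positivity
    have hpos' : (0 : ℝ) < h + j := by linarith
    have hr : ((h : ℝ) - j + 1) / (h + j) ≤ (n - h - i) / (h + i + 1) := by
      apply div_le_div₀ <;> linarith
    have heq : (n.choose (h + i + 1) : ℝ) =
        n.choose (h + i) * ((n - h - i) / (h + i + 1)) := by
      field_simp
      linarith
    rw [← add_assoc, heq, pow_succ, ← mul_assoc]
    apply mul_le_mul ih hr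
    · apply div_nonneg <;> linarith
    · positivity

theorem choose_half_le_mul (n h j : ℕ) (hn : 0 < n) (hh : 2 * h ≤ n) (hj : j ≤ h)
    (hjL : (j : ℝ) * (2 * j - 1) ≤ (h - j + 1) * Real.log n) :
    n.choose h ≤ n * n.choose (h + j) := by
  have h2 : (j : ℝ) ≤ h := by exact_mod_cast hj
  have hn' : (0 : ℝ) < n := by exact_mod_cast hn
  rcases Nat.eq_zero_or_pos j with rfl | hj0
  · exact Nat.le_mul_of_pos_left _ hn
  have hj0' : (1 : ℝ) ≤ j := by exact_mod_cast hj0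
  have hA : (0 : ℝ) < h - j + 1 := by linarith
  have hB : (0 : ℝ) < h + j := by linarith
  -- `1 / r = 1 + (2j-1)/(h-j+1) ≤ exp ((2j-1)/(h-j+1))` for the quotient `r`.
  have h1 : ((h : ℝ) + j) / (h - j + 1) ≤ Real.exp ((2 * j - 1) / (h - j + 1)) := by
    refine le_trans (le_of_eq ?_) (Real.add_one_le_exp _)
    field_simp
    ring
  have h3 : (((h : ℝ) + j) / (h - j + 1)) ^ j ≤ n := by
    refine (pow_le_pow_left₀ (by positivity) h1 j).trans ?_
    rw [← Real.exp_nat_mul, ← Real.le_log_iff_exp_le hn', ← mul_div_assoc, div_le_iff₀ hA]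
    linarith
  have h4 := choose_mul_pow_le n h j hh hj j le_rfl
  have h5 : (((h : ℝ) - j + 1) / (h + j)) ^ j * (((h : ℝ) + j) / (h - j + 1)) ^ j = 1 := by
    rw [← mul_pow]
    have : ((h : ℝ) - j + 1) / (h + j) * ((h + j) / (h - j + 1)) = 1 := by field_simp
    rw [this, one_pow]
  have h6 : (n.choose h : ℝ) ≤ n * n.choose (h + j) := by
    calc (n.choose h : ℝ)
        = (n.choose h : ℝ) * (((h : ℝ) - j + 1) / (h + j)) ^ j *
            (((h : ℝ) + j) / (h - j + 1)) ^ j := by rw [mul_assoc, h5, mul_one]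
      _ ≤ n.choose (h + j) * n := by
          apply mul_le_mul h4 h3 (by positivity) (by positivity)
      _ = _ := mul_comm _ _
  exact_mod_cast h6

theorem two_le_log {x : ℝ} (hx : 20 ≤ x) : 2 ≤ Real.log x := by
  rw [Real.le_log_iff_exp_le (by linarith)]
  have h := Real.exp_one_lt_d9
  have h0 := Real.exp_pos 1
  have : Real.exp 2 = Real.exp 1 * Real.exp 1 := by rw [← Real.exp_add]; norm_num
  nlinarith

theorem log_le_div_four {x : ℝ} (hx : 20 ≤ x) : Real.log x ≤ x / 4 := by
  -- The tangent line of `log` at `5` is used, with `log 5 ≤ 2`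
  have h5 : Real.log 5 ≤ 2 := by
    rw [Real.log_le_iff_le_exp (by norm_num)]
    have h := Real.exp_one_gt_d9
    have : Real.exp 2 = Real.exp 1 * Real.exp 1 := by rw [← Real.exp_add]; norm_num
    nlinarith
  have h1 := Real.log_le_sub_one_of_pos (x := x / 5) (by linarith)
  rw [Real.log_div (by linarith) (by norm_num)] at h1
  linarith

/-- There is a level `k`, at least `√(n log n) / 8` above `n / 2`, whose binomial coefficient is
at least `2 ^ n / (n * (n + 1))`. -/
theorem exists_large_choose (n : ℕ) (hn : 20 ≤ n) :
    ∃ k : ℕ, Real.sqrt (n * Real.log n) / 4 ≤ 2 * (k : ℝ) - n ∧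
      2 ^ n ≤ (n + 1) * (n * n.choose k) := by
  have hn' : (20 : ℝ) ≤ n := by exact_mod_cast hn
  have hL2 := two_le_log hn'
  have hL4 := log_le_div_four hn'
  set L := Real.log n with hL
  obtain ⟨s, hs⟩ : ∃ s, s = Real.sqrt (n * L) / 4 := ⟨_, rfl⟩
  have hs0 : 0 ≤ s := by rw [hs]; positivity
  have hss : s * s = n * L / 16 := by
    have := Real.mul_self_sqrt (show 0 ≤ (n : ℝ) * L by positivity)
    rw [hs]; linarith
  have hs8 : s ≤ n / 8 := by nlinarith
  -- The extra `1 / 2` absorbs the rounding in `n / 2`.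
  obtain ⟨j, hj⟩ : ∃ j : ℕ, j = ⌈(s + 1) / 2⌉₊ := ⟨_, rfl⟩
  have hj1 : (s + 1) / 2 ≤ j := by rw [hj]; exact Nat.le_ceil _
  have hj2 : (j : ℝ) < (s + 1) / 2 + 1 := by rw [hj]; exact Nat.ceil_lt_add_one (by positivity)
  obtain ⟨h, hh⟩ : ∃ h : ℕ, h = n / 2 := ⟨_, rfl⟩
  have hh1 : (n : ℝ) ≤ 2 * h + 1 := by
    have : n ≤ 2 * h + 1 := by omega
    exact_mod_cast this
  have hjh : j ≤ h := by
    have : (j : ℝ) ≤ h := by linarith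
    exact_mod_cast this
  refine ⟨h + j, ?_, ?_⟩
  · rw [← hs]; push_cast; linarith
  · refine (two_pow_le_mul_choose_half n).trans (Nat.mul_le_mul_left _ ?_)
    rw [← hh]
    refine choose_half_le_mul n h j (by omega) (by omega) hjh ?_
    have e1 : (j : ℝ) * (2 * j - 1) ≤ (s + 3) / 2 * (s + 2) := by
      apply mul_le_mul <;> linarith
    have e2 : ((n : ℝ) - s - 2) / 2 * L ≤ (h - j + 1) * L := by
      apply mul_le_mul_of_nonneg_right <;> linarith
    have e3 : s * L ≤ n / 8 * L := mul_le_mul_of_nonneg_right hs8 (by linarith)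
    have e4 : (20 : ℝ) * L ≤ n * L := mul_le_mul_of_nonneg_right hn' (by linarith)
    have e5 : (n : ℝ) * 2 ≤ n * L := mul_le_mul_of_nonneg_left hL2 (by linarith)
    refine e1.trans (le_trans ?_ e2)
    linarith

theorem const_le : 1 / (4 * Real.sqrt (2 * Real.pi)) ≤ 1 / 10 := by
  have : (5 / 2 : ℝ) ≤ Real.sqrt (2 * Real.pi) := by
    apply Real.le_sqrt_of_sq_le
    linarith [Real.pi_gt_d2]
  apply one_div_le_one_div_of_le <;> linarith

theorem two_pow_le_mul_cube (n : ℕ) (hn : 3 ≤ n) (hlt : n < 20) : 2 ^ n ≤ 80 * n ^ 3 := by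
  interval_cases n <;> norm_num

/-- For a nonempty `U* ⊆ V` with separated demand `D*`, the number of subsets `S ⊆ V`
with `Σ_{x∈U*} w_S(x) ≥ (D*/4)·√(ln n / n)` is at least `(c/(8n³))·2^n`,
where `c = 1/(4√(2π))` and `n = |V| ≥ 3`. -/
theorem sparsest_cut_sampling_success_count
    {α ι : Type*} [Fintype α] [DecidableEq α] [Fintype ι]
    (hn : 3 ≤ Fintype.card α)
    (u v : ι → α) (hne : ∀ i, u i ≠ v i) (d : ι → ℝ) (hd : ∀ i, 0 < d i)
    (Ustar : Finset α) (hU : Ustar.Nonempty)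
    (D : ℝ) (hD : D = ∑ i ∈ Finset.univ.filter (Separated u v Ustar), d i) :
    1 / (4 * Real.sqrt (2 * Real.pi)) / (8 * (Fintype.card α : ℝ) ^ 3) *
        2 ^ (Fintype.card α) ≤
      (Set.ncard {S : Finset α |
        D / 4 * Real.sqrt (Real.log (Fintype.card α) / (Fintype.card α)) ≤
          ∑ x ∈ Ustar, sepWeight u v d S x} : ℝ) := by
  classical
  set n := Fintype.card α with hndef
  have hn0 : (0 : ℝ) < n := by exact_mod_cast (by omega : 0 < n)
  have : Nonempty α := hU.to_type
  have hD0 : 0 ≤ D := by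
    rw [hD]; exact Finset.sum_nonneg fun i _ => (hd i).le
  have hsum : ∑ x, demandAt u v d Ustar x = 2 * D := by
    have := sum_demandAt_mul u v d Ustar fun _ => 1
    simp only [mul_one] at this
    rw [this, ← Finset.sum_mul, hD]
    ring
  let p : Finset α → Prop := fun T =>
    D / 4 * Real.sqrt (Real.log n / n) ≤ 1 / 2 * ∑ x, demandAt u v d Ustar x * signOf T x
  have hcard : (Finset.univ.filter p).card ≤ Set.ncard {S : Finset α |
      D / 4 * Real.sqrt (Real.log n / n) ≤ ∑ x ∈ Ustar, sepWeight u v d S x} := by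
    rw [← Set.ncard_coe_finset, ← Set.ncard_image_of_injective _ (agree_injective Ustar)]
    refine Set.ncard_le_ncard ?_ (Set.toFinite _)
    rintro _ ⟨T, hT, rfl⟩
    have hT : p T := by simpa using hT
    rw [Set.mem_ofPred_eq]
    rw [sum_sepWeight_agree]
    exact hT
  have hcard' : ((Finset.univ.filter p).card : ℝ) ≤ _ := Nat.cast_le.2 hcard
  refine le_trans ?_ hcard'
  have hconst : 1 / (4 * Real.sqrt (2 * Real.pi)) / (8 * (n : ℝ) ^ 3) * 2 ^ n ≤
      2 ^ n / (80 * (n : ℝ) ^ 3) := by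
    have : 1 / (4 * Real.sqrt (2 * Real.pi)) / (8 * (n : ℝ) ^ 3) ≤
        1 / 10 / (8 * (n : ℝ) ^ 3) := by
      gcongr ?_ / _
      exact const_le
    refine (mul_le_mul_of_nonneg_right this (by positivity)).trans (le_of_eq ?_)
    field_simp
    norm_num
  refine hconst.trans ?_
  rw [div_le_iff₀ (by positivity)]
  rcases lt_or_ge n 20 with hlt | hge
  · have hp : p Finset.univ := by
      have h1 : Real.sqrt (Real.log n / n) ≤ 1 := by
        refine Real.sqrt_le_one.2 ?_
        rw [div_le_one hn0]
        exact Real.log_le_self hn0.le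
      simp only [p, signOf, Finset.mem_univ, if_true, mul_one, hsum]
      nlinarith
    have h1 : 1 ≤ (Finset.univ.filter p).card :=
      Finset.card_pos.2 ⟨Finset.univ, by simpa using hp⟩
    have h2 := two_pow_le_mul_cube n hn hlt
    have h3 : 2 ^ n ≤ (Finset.univ.filter p).card * (80 * n ^ 3) :=
      h2.trans (Nat.le_mul_of_pos_left _ h1)
    exact_mod_cast h3
  · obtain ⟨k, hk, hk2⟩ := exists_large_choose n hge
    have hgood := choose_le_card_mul_good (demandAt u v d Ustar) k p (by
      intro T hT
      rw [hsum, ← hndef] at hT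
      have hsq : (n : ℝ) * Real.sqrt (Real.log n / n) = Real.sqrt (n * Real.log n) := by
        have : (n : ℝ) * Real.log n = n ^ 2 * (Real.log n / n) := by field_simp
        rw [this, Real.sqrt_mul (by positivity), Real.sqrt_sq hn0.le]
      have hkD := mul_le_mul_of_nonneg_right hk (show 0 ≤ D by exact hD0)
      rw [← hsq] at hkD
      refine le_of_mul_le_mul_left ?_ hn0
      linarith)
    rw [← hndef] at hgood
    have h3 : 2 ^ n ≤ (Finset.univ.filter p).card * (80 * n ^ 3) := by
      calc 2 ^ n ≤ (n + 1) * (n * n.choose k) := hk2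
        _ ≤ (80 * n) * (n * (n * (Finset.univ.filter p).card)) := by
            gcongr
            omega
        _ = _ := by ring
    exact_mod_cast h3
end
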